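/- Let M = {m1, m2, m3}, W = {w1, w2, w3}, and let P be the preference profile in which every agent ranks being unmatched last and: m1 ranks w1, w2, w3; m2 ranks w1, w3, w2; m3 ranks w2, w1, w3; w1 ranks m3, m2, m1; w2 ranks m2, m1, m3; w3 ranks m3, m2, m1. Then no coalition blocks, ex-post at P, the mechanism that outputs a uniformly random perfect matching (i.e., the uniform distribution over the six matchings in which every agent is matched). -/

import Mathlib

open scoped ENNReal

namespace Unraveling

variable (M W : Type*) [Fintype M] [DecidableEq M] [Fintype W] [DecidableEq W]

/-- A matching between men `M` and women `W`.  `Sum.inl m` denotes man `m`,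
`Sum.inr w` denotes woman `w`; `toFun a = a` means agent `a` is unmatched. -/
structure Matching where
  toFun : M ⊕ W → M ⊕ W
  man_range : ∀ m : M, toFun (Sum.inl m) = Sum.inl m ∨ ∃ w : W, toFun (Sum.inl m) = Sum.inr w
  woman_range : ∀ w : W, toFun (Sum.inr w) = Sum.inr w ∨ ∃ m : M, toFun (Sum.inr w) = Sum.inl m
  mutual_cond : ∀ (m : M) (w : W), toFun (Sum.inl m) = Sum.inr w ↔ toFun (Sum.inr w) = Sum.inl m

/-- A preference profile: each man has a ranking (a bijection onto `{1,…,|W|+1}`,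
encoded as an `Equiv` onto `Fin (|W|+1)`) of the women together with the option
(`none`) of remaining unmatched, and symmetrically for women. -/
structure Profile where
  mpref : M → (Option W ≃ Fin (Fintype.card W + 1))
  wpref : W → (Option M ≃ Fin (Fintype.card M + 1))

variable {M W}

/-- The partner of man `m` under matching `μ` (`none` if unmatched). -/
def Matching.partnerM (μ : Matching M W) (m : M) : Option W :=
  match μ.toFun (Sum.inl m) with
  | Sum.inl _ => none
  | Sum.inr w => some w

/-- The partner of woman `w` under matching `μ` (`none` if unmatched). -/
def Matching.partnerW (μ : Matching M W) (w : W) : Option M :=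
  match μ.toFun (Sum.inr w) with
  | Sum.inr _ => none
  | Sum.inl m => some m

/-- The rank (`1` = most preferred) that man `m` assigns to `o` under profile `P`. -/
def mrank (P : Profile M W) (m : M) (o : Option W) : ℕ := (P.mpref m o : ℕ) + 1

/-- The rank (`1` = most preferred) that woman `w` assigns to `o` under profile `P`. -/
def wrank (P : Profile M W) (w : W) (o : Option M) : ℕ := (P.wpref w o : ℕ) + 1

/-- The rank that agent `a` assigns to his/her partner under matching `μ`. -/
def prank (P : Profile M W) (μ : Matching M W) : M ⊕ W → ℕ
  | Sum.inl m => mrank P m (μ.partnerM m)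
  | Sum.inr w => wrank P w (μ.partnerW w)

/-- The rank that agent `a` assigns to remaining unmatched. -/
def urank (P : Profile M W) : M ⊕ W → ℕ
  | Sum.inl m => mrank P m none
  | Sum.inr w => wrank P w none

/-- Stability of a matching at a profile. -/
def IsStable (P : Profile M W) (μ : Matching M W) : Prop :=
  (∀ a : M ⊕ W, prank P μ a ≤ urank P a) ∧
  (∀ (m : M) (w : W), mrank P m (some w) < prank P μ (Sum.inl m) →
     prank P μ (Sum.inr w) < wrank P w (some m))

/-- A mechanism maps each preference profile to a probability distribution over matchings. -/
abbrev Mechanism (M W : Type*) [Fintype M] [DecidableEq M] [Fintype W] [DecidableEq W] :=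
  Profile M W → PMF (Matching M W)

/-- The probability that `p` assigns to the set `s`. -/
noncomputable def prob {α : Type*} (p : PMF α) (s : Set α) : ℝ≥0∞ :=
  ∑' x, s.indicator (fun y => p y) x

/-- CDF of the rank that agent `a` assigns to his/her random partner, when the
matching is drawn from `p` and the profile is `P`. -/
noncomputable def cdfAt (P : Profile M W) (p : PMF (Matching M W)) (a : M ⊕ W) (n : ℕ) : ℝ≥0∞ :=
  prob p {μ | prank P μ a ≤ n}

/-- `SD F G` : the rank distribution with CDF `F` strictly first-order
stochastically dominates the one with CDF `G`. -/
def SD (F G : ℕ → ℝ≥0∞) : Prop := (∀ n, G n ≤ F n) ∧ ∃ n, G n < F n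

/-- A coalition consisting of at most one man and at most one woman. -/
def IsPairCoalition (A' : Set (M ⊕ W)) : Prop :=
  {m : M | Sum.inl m ∈ A'}.Subsingleton ∧ {w : W | Sum.inr w ∈ A'}.Subsingleton

/-- Coalition `A'` blocks mechanism `φ` ex-post at profile `P`. -/
def BlocksExPost (A' : Set (M ⊕ W)) (φ : Mechanism M W) (P : Profile M W) : Prop :=
  A'.Nonempty ∧ ∃ φ' : Mechanism M W,
    (∀ a ∈ A', prob (φ' P) {μ | μ.toFun a ∈ A'} = 1) ∧
    (∀ a ∈ A', SD (cdfAt P (φ' P) a) (cdfAt P (φ P) a))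

def ExPostStable (φ : Mechanism M W) : Prop :=
  ∀ (P : Profile M W) (A' : Set (M ⊕ W)), ¬ BlocksExPost A' φ P

def ExPostPairwiseStable (φ : Mechanism M W) : Prop :=
  ∀ (P : Profile M W) (A' : Set (M ⊕ W)), IsPairCoalition A' → ¬ BlocksExPost A' φ P

/-- Ex-ante CDF of the rank of agent `a`'s partner under mechanism `φ`, when
the profile is drawn from prior `ψ`. -/
noncomputable def cdfExAnte (ψ : PMF (Profile M W)) (φ : Mechanism M W) (a : M ⊕ W) (n : ℕ) : ℝ≥0∞ :=
  ∑' P, ψ P * cdfAt P (φ P) a n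

/-- Coalition `A'` blocks mechanism `φ` ex-ante at prior `ψ`. -/
def BlocksExAnte (A' : Set (M ⊕ W)) (φ : Mechanism M W) (ψ : PMF (Profile M W)) : Prop :=
  A'.Nonempty ∧ ∃ φ' : Mechanism M W,
    (∀ a ∈ A', (∑' P, ψ P * prob (φ' P) {μ | μ.toFun a ∈ A'}) = 1) ∧
    (∀ a ∈ A', SD (cdfExAnte ψ φ' a) (cdfExAnte ψ φ a))

def ExAnteStableAt (φ : Mechanism M W) (ψ : PMF (Profile M W)) : Prop :=
  ∀ A' : Set (M ⊕ W), ¬ BlocksExAnte A' φ ψ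

def ExAnteStable (φ : Mechanism M W) : Prop := ∀ ψ, ExAnteStableAt φ ψ

def ExAntePairwiseStable (φ : Mechanism M W) : Prop :=
  ∀ (ψ : PMF (Profile M W)) (A' : Set (M ⊕ W)), IsPairCoalition A' → ¬ BlocksExAnte A' φ ψ

/-- `prefEq P P' a` : profiles `P` and `P'` give agent `a` the same preferences. -/
def prefEq (P P' : Profile M W) : M ⊕ W → Prop
  | Sum.inl m => P.mpref m = P'.mpref m
  | Sum.inr w => P.wpref w = P'.wpref w

/-- The event `Y_a(P̃_a)`: profiles in which `a`'s preferences agree with `Pt`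
and every other member of the coalition `A'` has preferences in his/her
acceptance set `R`. -/
def interimEvent (A' : Set (M ⊕ W)) (R : (M ⊕ W) → Set (Profile M W)) (a : M ⊕ W)
    (Pt : Profile M W) : Set (Profile M W) :=
  {P | prefEq P Pt a ∧ ∀ a' ∈ A', a' ≠ a → P ∈ R a'}

/-- CDF of the rank of `a`'s partner under `φ`, with the profile drawn from `ψ`
conditioned on the event `Y`. -/
noncomputable def cdfCond (ψ : PMF (Profile M W)) (Y : Set (Profile M W)) (φ : Mechanism M W)
    (a : M ⊕ W) (n : ℕ) : ℝ≥0∞ :=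
  (∑' P, Y.indicator (fun P' => ψ P' * cdfAt P' (φ P') a n) P) / prob ψ Y

/-- Coalition `A'` blocks mechanism `φ` in the interim at prior `ψ`.  Each `R a`
is the set of profiles in which `a`'s preferences are ones at which `a` agrees to
deviate; it is required to depend only on `a`'s own preferences. -/
def BlocksInterim (A' : Set (M ⊕ W)) (φ : Mechanism M W) (ψ : PMF (Profile M W)) : Prop :=
  A'.Nonempty ∧ ∃ (φ' : Mechanism M W) (R : (M ⊕ W) → Set (Profile M W)),
    (∀ (a : M ⊕ W) (P P' : Profile M W), prefEq P P' a → (P ∈ R a ↔ P' ∈ R a)) ∧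
    (∀ a ∈ A', ∀ P : Profile M W, prob (φ' P) {μ | μ.toFun a ∈ A'} = 1) ∧
    (∀ a ∈ A', ∀ Pt : Profile M W,
      Pt ∈ R a ↔ (0 < prob ψ (interimEvent A' R a Pt) ∧
        SD (cdfCond ψ (interimEvent A' R a Pt) φ' a)
           (cdfCond ψ (interimEvent A' R a Pt) φ a))) ∧
    0 < prob ψ {P | ∀ a ∈ A', P ∈ R a}

def InterimStableAt (φ : Mechanism M W) (ψ : PMF (Profile M W)) : Prop :=
  ∀ A' : Set (M ⊕ W), ¬ BlocksInterim A' φ ψ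

def InterimStable (φ : Mechanism M W) : Prop := ∀ ψ, InterimStableAt φ ψ

def InterimPairwiseStable (φ : Mechanism M W) : Prop :=
  ∀ (ψ : PMF (Profile M W)) (A' : Set (M ⊕ W)), IsPairCoalition A' → ¬ BlocksInterim A' φ ψ

/-- `MRanks P m rw ru` : man `m` assigns rank `rw w` to each woman `w` and
rank `ru` to remaining unmatched. -/
def MRanks (P : Profile M W) (m : M) (rw : W → ℕ) (ru : ℕ) : Prop :=
  (∀ w, mrank P m (some w) = rw w) ∧ mrank P m none = ru

/-- `WRanks P w rm ru` : woman `w` assigns rank `rm m` to each man `m` and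
rank `ru` to remaining unmatched. -/
def WRanks (P : Profile M W) (w : W) (rm : M → ℕ) (ru : ℕ) : Prop :=
  (∀ m, wrank P w (some m) = rm m) ∧ wrank P w none = ru

instance (P : Profile M W) (m : M) (rw : W → ℕ) (ru : ℕ) : Decidable (MRanks P m rw ru) :=
  decidable_of_iff ((∀ w, mrank P m (some w) = rw w) ∧ mrank P m none = ru) Iff.rfl

instance (P : Profile M W) (w : W) (rm : M → ℕ) (ru : ℕ) : Decidable (WRanks P w rm ru) :=
  decidable_of_iff ((∀ m, wrank P w (some m) = rm m) ∧ wrank P w none = ru) Iff.rfl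

/-- The perfect matching induced by a bijection `e : M ≃ W`. -/
def matchingOf (e : M ≃ W) : Matching M W where
  toFun a :=
    match a with
    | Sum.inl m => Sum.inr (e m)
    | Sum.inr w => Sum.inl (e.symm w)
  man_range m := Or.inr ⟨e m, rfl⟩
  woman_range w := Or.inr ⟨e.symm w, rfl⟩
  mutual_cond m w := by
    constructor
    · intro h
      simp only [Sum.inr.injEq] at h
      simp [← h]
    · intro h
      simp only [Sum.inl.injEq] at h
      simp [← h]

/-- `P'` is the permutation of profile `P` obtained by (`σM`, `σW`):
`P_a(a') = P'_{σ(a)}(σ(a'))` for all agents `a` and all `a'` in the domain of `P_a`. -/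
def IsPermutedProfile (σM : Equiv.Perm M) (σW : Equiv.Perm W) (P P' : Profile M W) : Prop :=
  (∀ m w, P'.mpref (σM m) (some (σW w)) = P.mpref m (some w)) ∧
  (∀ m, P'.mpref (σM m) none = P.mpref m none) ∧
  (∀ w m, P'.wpref (σW w) (some (σM m)) = P.wpref w (some m)) ∧
  (∀ w, P'.wpref (σW w) none = P.wpref w none)

/-- Probability (jointly over the profile drawn from `ψ` and the internal
randomization of `φ`) that agent `a` is assigned a partner of rank exactly `k`. -/
noncomputable def probRankEq (ψ : PMF (Profile M W)) (φ : Mechanism M W) (a : M ⊕ W) (k : ℕ) : ℝ≥0∞ :=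
  ∑' P, ψ P * prob (φ P) {μ | prank P μ a = k}

/-- CDF of a distribution on ranks `{1,2,3}` with probabilities `q1`, `q2`, `q3`. -/
def cdf3 (q1 q2 q3 : ℝ) (n : ℕ) : ℝ :=
  (if 1 ≤ n then q1 else 0) + (if 2 ≤ n then q2 else 0) + (if 3 ≤ n then q3 else 0)

/-- Strict first-order stochastic dominance for real-valued rank CDFs. -/
def SDR (F G : ℕ → ℝ) : Prop := (∀ n, G n ≤ F n) ∧ ∃ n, G n < F n

end Unraveling

namespace Unraveling

/-!
The law of each agent's partner under a uniform perfect matching is uniform on the other side, since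
renaming the women preserves the uniform distribution. Suppose that `q` is the distribution of the
matching proposed to a blocking coalition. Dominance at rank `1` makes every member meet its first
choice with probability at least `1/3` under `q`, so the coalition contains the first choices of its
members, hence the cycle `m2 → w1 → m3 → w2 → m2`. Dominance at rank `2` puts `m1` in the coalition
as well: if `w2` never met `m1`, she would meet `m2` with probability at least `2/3`, while `m2`
meets `w1` or `w3` with probability at least `2/3`. Now `m1` and `m2` both have `w1` as first choice
and `w1` has `m3` as first choice, so the partner of `w1` under `q` is uniform and she does not
gain.
-/

theorem pmf_eq_of_le_on_finset {α : Type*} {p q : PMF α} {s : Finset α}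
    (hs : ∑ x ∈ s, p x = 1) (hle : ∀ x ∈ s, p x ≤ q x) : p = q := by
  have hsupport : p.support ⊆ s := by
    rw [← PMF.toOuterMeasure_apply_eq_one_iff, PMF.toOuterMeasure_apply_finset, hs]
  have hpq (x : α) : p x ≤ q x := by
    by_cases hx : x ∈ s
    · exact hle x hx
    · rw [(p.apply_eq_zero_iff x).2 fun h => hx (hsupport h)]
      exact zero_le
  ext x
  refine (hpq x).antisymm (le_of_not_gt fun hlt => ?_)
  have hlt_one : ∑' y, p y < ∑' y, q y := ENNReal.tsum_lt_tsum p.tsum_coe_ne_top hpq hlt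
  rw [p.tsum_coe, q.tsum_coe] at hlt_one
  exact hlt_one.false

theorem pmf_add_add_le_one {α : Type*} (p : PMF α) {x y z : α} (hxy : x ≠ y) (hxz : x ≠ z)
    (hyz : y ≠ z) : p x + p y + p z ≤ 1 := by
  classical
  calc p x + p y + p z = ∑ t ∈ {x, y, z}, p t := by simp [hxy, hxz, hyz, add_assoc]
    _ ≤ ∑' t, p t := ENNReal.sum_le_tsum _
    _ = 1 := p.tsum_coe

theorem prob_eq_toOuterMeasure {α : Type*} (p : PMF α) (s : Set α) :
    prob p s = p.toOuterMeasure s :=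
  (p.toOuterMeasure_apply s).symm

theorem prob_preimage_perm {α : Type*} {p : PMF α} {σ : Equiv.Perm α} (hσ : ∀ x, p (σ x) = p x)
    (s : Set α) : prob p (σ ⁻¹' s) = prob p s := by
  rw [prob, prob, ← σ.tsum_eq (s.indicator _)]
  refine tsum_congr fun x => ?_
  rw [← Set.indicator_comp_right]
  simp only [Function.comp_def, hσ]

section PartnerLaw

variable {M W : Type*}

theorem Matching.toFun_eq_comm (μ : Matching M W) {a b : M ⊕ W} :
    μ.toFun a = b ↔ μ.toFun b = a := by
  have eq_of_inl {m m' : M} (h : μ.toFun (Sum.inl m) = Sum.inl m') : m = m' := by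
    rcases μ.man_range m with h' | ⟨w, h'⟩ <;> simp_all
  have eq_of_inr {w w' : W} (h : μ.toFun (Sum.inr w) = Sum.inr w') : w = w' := by
    rcases μ.woman_range w with h' | ⟨m, h'⟩ <;> simp_all
  rcases a with m | w <;> rcases b with m' | w'
  · constructor <;> intro h <;> obtain rfl := eq_of_inl h <;> exact h
  · exact μ.mutual_cond m w'
  · exact (μ.mutual_cond m' w).symm
  · constructor <;> intro h <;> obtain rfl := eq_of_inr h <;> exact h

/-- The distribution of the partner of agent `a` in a matching drawn from `p`; an unmatched agent
is its own partner. -/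
noncomputable def partnerLaw (p : PMF (Matching M W)) (a : M ⊕ W) : PMF (M ⊕ W) :=
  p.map fun μ => μ.toFun a

theorem partnerLaw_apply (p : PMF (Matching M W)) (a b : M ⊕ W) :
    partnerLaw p a b = prob p {μ | μ.toFun a = b} := by
  rw [← PMF.toOuterMeasure_apply_singleton, partnerLaw, PMF.toOuterMeasure_map_apply,
    prob_eq_toOuterMeasure]
  rfl

theorem partnerLaw_comm (p : PMF (Matching M W)) (a b : M ⊕ W) :
    partnerLaw p a b = partnerLaw p b a := by
  simp only [partnerLaw_apply, Matching.toFun_eq_comm _ (a := a)]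

theorem mem_of_partnerLaw_ne_zero {p : PMF (Matching M W)} {A : Set (M ⊕ W)} {a b : M ⊕ W}
    (hA : prob p {μ | μ.toFun a ∈ A} = 1) (hb : partnerLaw p a b ≠ 0) : b ∈ A := by
  have hsupport : (partnerLaw p a).support ⊆ A := by
    rw [← PMF.toOuterMeasure_apply_eq_one_iff, partnerLaw, PMF.toOuterMeasure_map_apply,
      ← prob_eq_toOuterMeasure]
    exact hA
  exact hsupport hb

end PartnerLaw

section RelabelWomen

variable {M W : Type*}

/-- The matching obtained from `μ` by renaming the women along `σ`. -/
def Matching.relabelWomen (σ : Equiv.Perm W) (μ : Matching M W) : Matching M W where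
  toFun a := (Equiv.refl M).sumCongr σ (μ.toFun (((Equiv.refl M).sumCongr σ).symm a))
  man_range m := by
    rcases μ.man_range m with h | ⟨w, h⟩ <;> simp [h]
  woman_range w := by
    rcases μ.woman_range (σ.symm w) with h | ⟨m, h⟩ <;> simp [h]
  mutual_cond m w := by
    simp only [← Equiv.eq_symm_apply]
    exact μ.toFun_eq_comm

theorem Matching.relabelWomen_symm_relabelWomen (σ : Equiv.Perm W) (μ : Matching M W) :
    (μ.relabelWomen σ).relabelWomen σ.symm = μ := by
  have hinv (a : M ⊕ W) : (Equiv.refl M).sumCongr σ.symm ((Equiv.refl M).sumCongr σ a) = a :=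
    ((Equiv.refl M).sumCongr σ).symm_apply_apply a
  cases μ
  simp only [relabelWomen, Equiv.sumCongr_symm, Equiv.refl_symm, Equiv.symm_symm, hinv]

theorem Matching.forall_relabelWomen_ne_iff (σ : Equiv.Perm W) (μ : Matching M W) :
    (∀ a, (μ.relabelWomen σ).toFun a ≠ a) ↔ ∀ a, μ.toFun a ≠ a := by
  simp only [relabelWomen, ne_eq, ← Equiv.eq_symm_apply]
  exact ((Equiv.refl M).sumCongr σ).symm.forall_congr_right (q := fun a => μ.toFun a ≠ a)

theorem partnerLaw_inr_eq_of_relabelWomen_invariant {p : PMF (Matching M W)}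
    (hp : ∀ (σ : Equiv.Perm W) (μ : Matching M W), p (μ.relabelWomen σ) = p μ)
    (m : M) (w w' : W) :
    partnerLaw p (Sum.inl m) (Sum.inr w) = partnerLaw p (Sum.inl m) (Sum.inr w') := by
  classical
  let σ := Equiv.swap w w'
  let relabel : Equiv.Perm (Matching M W) :=
    { toFun := Matching.relabelWomen σ
      invFun := Matching.relabelWomen σ.symm
      left_inv := Matching.relabelWomen_symm_relabelWomen σ
      right_inv := Matching.relabelWomen_symm_relabelWomen σ.symm }
  have hpreimage : {μ : Matching M W | μ.toFun (Sum.inl m) = Sum.inr w} =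
      relabel ⁻¹' {μ | μ.toFun (Sum.inl m) = Sum.inr w'} := by
    ext μ
    change _ ↔ (Equiv.refl M).sumCongr σ (μ.toFun (Sum.inl m)) = Sum.inr w'
    rw [← Equiv.eq_symm_apply]
    simp [σ]
  rw [partnerLaw_apply, partnerLaw_apply, hpreimage]
  exact prob_preimage_perm (hp σ) _

theorem partnerLaw_inr_eq_inv_card [Fintype W] {p : PMF (Matching M W)}
    (hp : ∀ (σ : Equiv.Perm W) (μ : Matching M W), p (μ.relabelWomen σ) = p μ) {m : M}
    (hm : ∀ μ ∈ p.support, μ.toFun (Sum.inl m) ≠ Sum.inl m) (w : W) :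
    partnerLaw p (Sum.inl m) (Sum.inr w) = (Fintype.card W : ℝ≥0∞)⁻¹ := by
  have hman (m' : M) : partnerLaw p (Sum.inl m) (Sum.inl m') = 0 := by
    rw [PMF.apply_eq_zero_iff, partnerLaw, PMF.mem_support_map_iff]
    rintro ⟨μ, hμ, h⟩
    rcases μ.man_range m with h' | ⟨w', h'⟩
    · exact hm μ hμ h'
    · simp [h'] at h
  have hsum : ∑' b, partnerLaw p (Sum.inl m) b = 1 := PMF.tsum_coe _
  rw [ENNReal.summable.tsum_sum ENNReal.summable] at hsum
  simp only [hman, tsum_zero, zero_add, partnerLaw_inr_eq_of_relabelWomen_invariant hp m _ w,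
    tsum_fintype, Finset.sum_const, Finset.card_univ, nsmul_eq_mul] at hsum
  exact ENNReal.eq_inv_of_mul_eq_one_left (by rwa [mul_comm])

theorem partnerLaw_inr_eq_inv_card_of_uniform [Fintype M] [DecidableEq M] [Fintype W]
    [DecidableEq W] {p : PMF (Matching M W)} {c : ℝ≥0∞}
    (hp : ∀ μ, p μ = if ∀ a, μ.toFun a ≠ a then c else 0) (m : M) (w : W) :
    partnerLaw p (Sum.inl m) (Sum.inr w) = (Fintype.card W : ℝ≥0∞)⁻¹ := by
  refine partnerLaw_inr_eq_inv_card (fun σ μ => ?_) (fun μ hμ => ?_) w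
  · simp only [hp, Matching.forall_relabelWomen_ne_iff]
  · rw [PMF.mem_support_iff, hp, ite_ne_right_iff] at hμ
    exact hμ.1 _

end RelabelWomen

section RankDistribution

variable {M W : Type*} [Fintype M] [Fintype W]

/-- The rank that agent `a` assigns to having `b` as partner. Every `b` on the side of `a` gets
the rank of remaining unmatched, although only `b = a` can occur as partner. -/
def agentRank (P : Profile M W) : M ⊕ W → M ⊕ W → ℕ
  | Sum.inl m, b => mrank P m b.getRight?
  | Sum.inr w, b => wrank P w b.getLeft?

theorem agentRank_pos (P : Profile M W) (a b : M ⊕ W) : 0 < agentRank P a b := by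
  cases a <;> exact Nat.succ_pos _

theorem prank_eq_agentRank (P : Profile M W) (μ : Matching M W) (a : M ⊕ W) :
    prank P μ a = agentRank P a (μ.toFun a) := by
  rcases a with m | w
  · rcases h : μ.toFun (Sum.inl m) <;> simp [prank, agentRank, Matching.partnerM, h]
  · rcases h : μ.toFun (Sum.inr w) <;> simp [prank, agentRank, Matching.partnerW, h]

theorem cdfAt_eq_toOuterMeasure_partnerLaw (P : Profile M W) (p : PMF (Matching M W))
    (a : M ⊕ W) (n : ℕ) :
    cdfAt P p a n = (partnerLaw p a).toOuterMeasure {b | agentRank P a b ≤ n} := by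
  simp only [cdfAt, prob_eq_toOuterMeasure, partnerLaw, PMF.toOuterMeasure_map_apply,
    prank_eq_agentRank, Set.preimage_ofPred_eq]

theorem cdfAt_zero (P : Profile M W) (p : PMF (Matching M W)) (a : M ⊕ W) :
    cdfAt P p a 0 = 0 := by
  simp [cdfAt_eq_toOuterMeasure_partnerLaw, (agentRank_pos P a _).ne']

theorem partnerLaw_ne_of_SD_cdfAt {P : Profile M W} {p q : PMF (Matching M W)} {a : M ⊕ W}
    (h : SD (cdfAt P q a) (cdfAt P p a)) : partnerLaw p a ≠ partnerLaw q a := by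
  intro heq
  obtain ⟨n, hn⟩ := h.2
  simp only [cdfAt_eq_toOuterMeasure_partnerLaw, heq, lt_self_iff_false] at hn

/-- Agent `b`, on the other side of the market from agent `a`, has rank `k` among the options
of `a`. -/
def IsNthChoice (P : Profile M W) (k : ℕ) : M ⊕ W → M ⊕ W → Prop
  | Sum.inl m, Sum.inr w => mrank P m (some w) = k
  | Sum.inr w, Sum.inl m => wrank P w (some m) = k
  | _, _ => False

namespace IsNthChoice

variable {P : Profile M W} {k : ℕ} {a b c : M ⊕ W}

theorem agentRank_eq_iff (h : IsNthChoice P k a b) : agentRank P a c = k ↔ c = b := by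
  rcases a with m | w <;> rcases b with m' | w' <;> simp only [IsNthChoice] at h
  · simp only [← h, agentRank, mrank, add_left_inj, Fin.val_inj, (P.mpref m).apply_eq_iff_eq,
      Sum.getRight?_eq_some_iff]
  · simp only [← h, agentRank, wrank, add_left_inj, Fin.val_inj, (P.wpref w).apply_eq_iff_eq,
      Sum.getLeft?_eq_some_iff]

theorem cdfAt_succ (h : IsNthChoice P (k + 1) a b) (p : PMF (Matching M W)) :
    cdfAt P p a (k + 1) = cdfAt P p a k + partnerLaw p a b := by
  have hunion : {c | agentRank P a c ≤ k + 1} = {c | agentRank P a c ≤ k} ∪ {b} := by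
    ext c
    simp only [Set.mem_union, Set.mem_ofPred_eq, Set.mem_singleton_iff, ← h.agentRank_eq_iff]
    exact Nat.le_succ_iff
  have hdisjoint : Disjoint {c | agentRank P a c ≤ k} {b} := by
    simp [h.agentRank_eq_iff.2 rfl]
  rw [cdfAt_eq_toOuterMeasure_partnerLaw, cdfAt_eq_toOuterMeasure_partnerLaw, hunion,
    ← (partnerLaw p a).toOuterMeasure_apply_singleton b]
  simp only [PMF.toOuterMeasure_apply, Set.indicator_union_of_disjoint hdisjoint,
    ENNReal.tsum_add]

theorem cdfAt_one (h : IsNthChoice P 1 a b) (p : PMF (Matching M W)) :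
    cdfAt P p a 1 = partnerLaw p a b := by
  rw [h.cdfAt_succ, cdfAt_zero, zero_add]

theorem cdfAt_two (hb : IsNthChoice P 1 a b) (hc : IsNthChoice P 2 a c)
    (p : PMF (Matching M W)) : cdfAt P p a 2 = partnerLaw p a b + partnerLaw p a c := by
  rw [hc.cdfAt_succ, hb.cdfAt_one]

theorem partnerLaw_eq_of_forall (h : IsNthChoice P k a b) {p : PMF (Matching M W)} {r : ℝ≥0∞}
    (hp : ∀ m w, partnerLaw p (Sum.inl m) (Sum.inr w) = r) : partnerLaw p a b = r := by
  rcases a with m | w <;> rcases b with m' | w' <;> simp only [IsNthChoice] at h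
  · exact hp m w'
  · exact (partnerLaw_comm p _ _).trans (hp m' w)

end IsNthChoice

end RankDistribution

theorem m2_mem_of_firstChoice_closed {P : Profile (Fin 3) (Fin 3)} {A : Set (Fin 3 ⊕ Fin 3)}
    (hm1 : IsNthChoice P 1 (Sum.inl 0) (Sum.inr 0))
    (hm3 : IsNthChoice P 1 (Sum.inl 2) (Sum.inr 1))
    (hw1 : IsNthChoice P 1 (Sum.inr 0) (Sum.inl 2))
    (hw2 : IsNthChoice P 1 (Sum.inr 1) (Sum.inl 1))
    (hw3 : IsNthChoice P 1 (Sum.inr 2) (Sum.inl 2))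
    (hclosed : ∀ {a b}, a ∈ A → IsNthChoice P 1 a b → b ∈ A) (hA : A.Nonempty) :
    Sum.inl 1 ∈ A := by
  have of_m3 (h : Sum.inl 2 ∈ A) : Sum.inl 1 ∈ A := hclosed (hclosed h hm3) hw2
  obtain ⟨m | w, ha⟩ := hA
  · fin_cases m
    exacts [of_m3 (hclosed (hclosed ha hm1) hw1), ha, of_m3 ha]
  · fin_cases w
    exacts [of_m3 (hclosed ha hw1), hclosed ha hw2, of_m3 (hclosed ha hw3)]

theorem no_blocking_of_uniform_example1_general (P : Profile (Fin 3) (Fin 3))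
    (hm1 : IsNthChoice P 1 (Sum.inl 0) (Sum.inr 0))
    (hm2 : IsNthChoice P 1 (Sum.inl 1) (Sum.inr 0))
    (hm2' : IsNthChoice P 2 (Sum.inl 1) (Sum.inr 2))
    (hm3 : IsNthChoice P 1 (Sum.inl 2) (Sum.inr 1))
    (hw1 : IsNthChoice P 1 (Sum.inr 0) (Sum.inl 2))
    (hw2 : IsNthChoice P 1 (Sum.inr 1) (Sum.inl 1))
    (hw2' : IsNthChoice P 2 (Sum.inr 1) (Sum.inl 0))
    (hw3 : IsNthChoice P 1 (Sum.inr 2) (Sum.inl 2))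
    (φ : Mechanism (Fin 3) (Fin 3))
    (hφ : ∀ m w, partnerLaw (φ P) (Sum.inl m) (Sum.inr w) = 3⁻¹)
    (A' : Set (Fin 3 ⊕ Fin 3)) :
    ¬ BlocksExPost A' φ P := by
  rintro ⟨hA, φ', hclosed, hSD⟩
  have first_le {a b} (ha : a ∈ A') (hb : IsNthChoice P 1 a b) :
      3⁻¹ ≤ partnerLaw (φ' P) a b := by
    simpa only [hb.cdfAt_one, hb.partnerLaw_eq_of_forall hφ] using (hSD a ha).1 1
  have first_two_le {a b c} (ha : a ∈ A') (hb : IsNthChoice P 1 a b) (hc : IsNthChoice P 2 a c) :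
      3⁻¹ + 3⁻¹ ≤ partnerLaw (φ' P) a b + partnerLaw (φ' P) a c := by
    simpa only [hb.cdfAt_two hc, hb.partnerLaw_eq_of_forall hφ, hc.partnerLaw_eq_of_forall hφ]
      using (hSD a ha).1 2
  have first_mem {a b} (ha : a ∈ A') (hb : IsNthChoice P 1 a b) : b ∈ A' :=
    mem_of_partnerLaw_ne_zero (hclosed a ha) (ne_bot_of_le_ne_bot (by simp) (first_le ha hb))
  have m2_mem : Sum.inl 1 ∈ A' :=
    m2_mem_of_firstChoice_closed hm1 hm3 hw1 hw2 hw3 first_mem hA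
  have w1_mem : Sum.inr 0 ∈ A' := first_mem m2_mem hm2
  have w2_mem : Sum.inr 1 ∈ A' := first_mem (first_mem w1_mem hw1) hm3
  have m1_mem : Sum.inl 0 ∈ A' := by
    refine mem_of_partnerLaw_ne_zero (hclosed _ w2_mem) fun hzero => ?_
    have hw := first_two_le w2_mem hw2 hw2'
    rw [hzero, add_zero, partnerLaw_comm] at hw
    have hle := (add_le_add (first_two_le m2_mem hm2 hm2') hw).trans
      (pmf_add_add_le_one _ (by decide) (by decide) (by decide))
    rw [← ENNReal.toReal_le_toReal (by simp) (by simp)] at hle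
    norm_num [ENNReal.toReal_add] at hle
  have w1_law (m) : 3⁻¹ ≤ partnerLaw (φ' P) (Sum.inr 0) (Sum.inl m) := by
    fin_cases m
    exacts [(first_le m1_mem hm1).trans_eq (partnerLaw_comm ..),
      (first_le m2_mem hm2).trans_eq (partnerLaw_comm ..), first_le w1_mem hw1]
  refine partnerLaw_ne_of_SD_cdfAt (hSD _ w1_mem)
    (pmf_eq_of_le_on_finset (s := Finset.univ.map .inl) ?_ ?_)
  · simp [partnerLaw_comm _ (Sum.inr (0 : Fin 3)), hφ, ENNReal.mul_inv_cancel]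
  · simpa [partnerLaw_comm (φ P) (Sum.inr 0), hφ] using w1_law

/-- For the profile `P` of Example 1 (men `0,1,2`, women `0,1,2`;
`m1 : w1,w2,w3`; `m2 : w1,w3,w2`; `m3 : w2,w1,w3`; `w1 : m3,m2,m1`; `w2 : m2,m1,m3`;
`w3 : m3,m2,m1`, everyone ranking unmatched last), no coalition blocks ex-post at `P`
the mechanism that outputs a uniformly random perfect matching. -/
theorem no_blocking_of_uniform_example1 (P : Profile (Fin 3) (Fin 3))
    (hm1 : MRanks P 0 ![1, 2, 3] 4) (hm2 : MRanks P 1 ![1, 3, 2] 4)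
    (hm3 : MRanks P 2 ![2, 1, 3] 4)
    (hw1 : WRanks P 0 ![3, 2, 1] 4) (hw2 : WRanks P 1 ![2, 1, 3] 4)
    (hw3 : WRanks P 2 ![3, 2, 1] 4)
    (φ : Mechanism (Fin 3) (Fin 3))
    (hφ : ∀ μ : Matching (Fin 3) (Fin 3),
      φ P μ = if ∀ a, μ.toFun a ≠ a then (6 : ℝ≥0∞)⁻¹ else 0)
    (A' : Set (Fin 3 ⊕ Fin 3)) :
    ¬ BlocksExPost A' φ P :=
  no_blocking_of_uniform_example1_general P (hm1.1 0) (hm2.1 0) (hm2.1 2) (hm3.1 1) (hw1.1 2)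
    (hw2.1 1) (hw2.1 0) (hw3.1 2) φ
    (fun m w => by simpa using partnerLaw_inr_eq_inv_card_of_uniform hφ m w) A'

end Unraveling
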